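/- If Q is not identically zero on S₀, then for every E ∈ S₀: √(Q(E)) = sup{ |⟨J,E⟩| : J ∈ S₀*, Q*(J) = 1 }. -/

import Mathlib

open MeasureTheory

/-- `S₀`: the closed subspace of real Schwartz functions with zero mean
(the AC-condition `∫ E = 0`). -/
noncomputable def S0 : Submodule ℝ (SchwartzMap ℝ ℝ) where
  carrier := {E | ∫ s, E s = 0}
  zero_mem' := by simp
  add_mem' := by
    intro f g hf hg
    simp only [Set.mem_setOf_eq] at *
    have h : ∀ s : ℝ, (↑(f + g) : ℝ → ℝ) s = f s + g s := fun s => rfl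
    rw [show (↑(f + g) : ℝ → ℝ) = fun s => f s + g s from funext h,
      integral_add f.integrable g.integrable, hf, hg, add_zero]
  smul_mem' := by
    intro c f hf
    simp only [Set.mem_setOf_eq] at *
    have h : (↑(c • f) : ℝ → ℝ) = fun s => c • f s := rfl
    rw [h, integral_smul, hf, smul_zero]

/-- `S₀*`: the topological dual of `S₀` (continuous real-linear functionals). -/
abbrev S0d := ↥S0 →L[ℝ] ℝ

/-- Fourier transform `Ê(ν) = ∫ e^{−iνs} E(s) ds` of a Schwartz function. -/
noncomputable def fhat (E : SchwartzMap ℝ ℝ) (ν : ℝ) : ℂ :=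
  ∫ s : ℝ, Complex.exp (-(Complex.I * ν * s)) * (E s : ℂ)

/-- `B(E,E′) := ½ ∫ Re(Ê(ν)·conj(Ê′(ν))) m(dν)`. -/
noncomputable def Bform (m : Measure ℝ) (E E' : SchwartzMap ℝ ℝ) : ℝ :=
  (1/2) * ∫ ν, (fhat E ν * (starRingEnd ℂ) (fhat E' ν)).re ∂m

/-- `Q(E) := B(E,E) = ½ ∫ |Ê(ν)|² m(dν)`. -/
noncomputable def Qform (m : Measure ℝ) (E : ↥S0) : ℝ := Bform m E E

/-- The subdifferential `∂Q(E) ⊆ S₀*`. -/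
def subQ (m : Measure ℝ) (E : ↥S0) : Set S0d :=
  {J | ∀ E' : ↥S0, Qform m E' ≥ Qform m E + J (E' - E)}

/-- The Legendre–Fenchel transform `Q*(J) := sup_{E∈S₀} (2⟨J,E⟩ − Q(E))`, with values
in `[−∞,∞]` (in fact in `[0,∞]`). -/
noncomputable def Qstar (m : Measure ℝ) (J : S0d) : EReal :=
  ⨆ E : ↥S0, ((2 * J E - Qform m E : ℝ) : EReal)

/-- The subdifferential `∂Q*(J) ⊆ S₀`, with inequalities read in `[−∞,∞]`. -/
def subQstar (m : Measure ℝ) (J : S0d) : Set ↥S0 :=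
  {E | ∀ J' : S0d, Qstar m J' ≥ Qstar m J + ((J' E - J E : ℝ) : EReal)}

/-- The AC-conductivity `σ(E) := ½ ∂Q(E)`. -/
def sigmaMap (m : Measure ℝ) (E : ↥S0) : Set S0d := {J | (2:ℝ) • J ∈ subQ m E}

/-- The AC-resistivity `ρ(J) := ½ ∂Q*(J)`. -/
def rhoMap (m : Measure ℝ) (J : S0d) : Set ↥S0 := {E | (2:ℝ) • E ∈ subQstar m J}

/-- `Dom(ρ) := {J ∈ S₀* : ∂Q*(J) ≠ ∅}`. -/
def DomRho (m : Measure ℝ) : Set S0d := {J | (subQstar m J).Nonempty}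


lemma fhat_norm_exp (ν s : ℝ) : ‖Complex.exp (-(Complex.I * ν * s))‖ = 1 := by
  rw [show -(Complex.I * ν * s) = ((-(ν * s) : ℝ) : ℂ) * Complex.I by push_cast; ring]
  exact Complex.norm_exp_ofReal_mul_I _

lemma fhat_integrable (E : SchwartzMap ℝ ℝ) (ν : ℝ) :
    Integrable (fun s : ℝ => Complex.exp (-(Complex.I * ν * s)) * (E s : ℂ)) := by
  have h : Integrable (fun s : ℝ => (E s : ℂ)) := E.integrable.ofReal
  refine h.norm.mono' ?_ ?_
  · have : Continuous (fun s : ℝ => Complex.exp (-(Complex.I * ν * s)) * (E s : ℂ)) := by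
      have := E.continuous
      fun_prop
    exact this.aestronglyMeasurable
  · filter_upwards with s
    rw [norm_mul, fhat_norm_exp, one_mul]

lemma fhat_add (E F : SchwartzMap ℝ ℝ) (ν : ℝ) : fhat (E + F) ν = fhat E ν + fhat F ν := by
  unfold fhat
  rw [← integral_add (fhat_integrable E ν) (fhat_integrable F ν)]
  congr 1
  ext s
  simp [mul_add]

lemma fhat_smul (c : ℝ) (E : SchwartzMap ℝ ℝ) (ν : ℝ) : fhat (c • E) ν = c * fhat E ν := by
  unfold fhat
  rw [← integral_const_mul]
  congr 1
  ext s
  simp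
  ring

lemma fhat_bound (E : SchwartzMap ℝ ℝ) (ν : ℝ) : ‖fhat E ν‖ ≤ ∫ s, ‖E s‖ := by
  unfold fhat
  refine (norm_integral_le_integral_norm _).trans (le_of_eq ?_)
  congr 1
  ext s
  rw [norm_mul, fhat_norm_exp, one_mul, Complex.norm_real]

lemma fhat_continuous (E : SchwartzMap ℝ ℝ) : Continuous (fhat E) := by
  unfold fhat
  refine continuous_of_dominated (bound := fun s => ‖E s‖) ?_ ?_ E.integrable.norm ?_
  · exact fun ν => (fhat_integrable E ν).aestronglyMeasurable
  · intro ν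
    filter_upwards with s
    rw [norm_mul, fhat_norm_exp, one_mul, Complex.norm_real]
  · filter_upwards with s
    fun_prop

lemma B_le (E F : SchwartzMap ℝ ℝ) (ν : ℝ) :
    ‖(fhat E ν * (starRingEnd ℂ) (fhat F ν)).re‖ ≤ (∫ s, ‖E s‖) * ∫ s, ‖F s‖ := by
  refine (Complex.abs_re_le_norm _).trans ?_
  rw [norm_mul, RCLike.norm_conj]
  have := fhat_bound E ν
  have := fhat_bound F ν
  gcongr



lemma B_int (m : Measure ℝ) [IsFiniteMeasure m] (E F : SchwartzMap ℝ ℝ) :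
    Integrable (fun ν => (fhat E ν * (starRingEnd ℂ) (fhat F ν)).re) m := by
  refine (integrable_const ((∫ s, ‖E s‖) * ∫ s, ‖F s‖)).mono' ?_ ?_
  · have h1 := fhat_continuous E
    have h2 := fhat_continuous F
    have : Continuous (fun ν => (fhat E ν * (starRingEnd ℂ) (fhat F ν)).re) :=
      Complex.continuous_re.comp (h1.mul (Complex.continuous_conj.comp h2))
    exact this.aestronglyMeasurable
  · filter_upwards with ν using B_le E F ν

lemma B_add (m : Measure ℝ) [IsFiniteMeasure m] (E F G : SchwartzMap ℝ ℝ) : Bform m E (F + G) = Bform m E F + Bform m E G := by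
  unfold Bform
  rw [← mul_add, ← integral_add (B_int m E F) (B_int m E G)]
  congr 2
  ext ν
  rw [fhat_add, map_add, mul_add, Complex.add_re]

lemma B_smul (m : Measure ℝ) [IsFiniteMeasure m] (c : ℝ) (E F : SchwartzMap ℝ ℝ) : Bform m E (c • F) = c * Bform m E F := by
  unfold Bform
  rw [mul_left_comm, ← integral_const_mul c]
  congr 2
  ext ν
  rw [fhat_smul, map_mul, Complex.conj_ofReal, mul_left_comm, Complex.re_ofReal_mul]

lemma B_symm (m : Measure ℝ) [IsFiniteMeasure m] (E F : SchwartzMap ℝ ℝ) : Bform m E F = Bform m F E := by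
  unfold Bform
  congr 2
  ext ν
  simp
  ring

lemma B_nonneg (m : Measure ℝ) [IsFiniteMeasure m] (E : SchwartzMap ℝ ℝ) : 0 ≤ Bform m E E := by
  unfold Bform
  refine mul_nonneg (by norm_num) (integral_nonneg fun ν => ?_)
  simp only [Pi.zero_apply, Complex.mul_conj, Complex.ofReal_re]
  exact Complex.normSq_nonneg _

lemma B_bound (m : Measure ℝ) [IsFiniteMeasure m] (E F : SchwartzMap ℝ ℝ) :
    ‖Bform m E F‖ ≤ (1/2 * m.real Set.univ * ∫ s, ‖E s‖) * ∫ s, ‖F s‖ := by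
  unfold Bform
  have := norm_integral_le_of_norm_le_const (μ := m) (Filter.Eventually.of_forall (B_le E F))
  rw [norm_mul]
  norm_num
  norm_num at this
  linarith

lemma tendsto_L1 : Filter.Tendsto (fun F : SchwartzMap ℝ ℝ => ∫ s, ‖F s‖) (nhds 0) (nhds 0) := by
  have h : ∀ F : SchwartzMap ℝ ℝ, ∫ s, ‖F s‖ = ‖SchwartzMap.toLpCLM ℝ ℝ 1 volume F‖ := by
    intro F
    rw [L1.norm_eq_integral_norm]
    refine integral_congr_ae ?_
    filter_upwards [SchwartzMap.coeFn_toLp F 1 volume] with s hs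
    rw [← hs]; rfl
  simp_rw [h]
  have := (SchwartzMap.toLpCLM (E := ℝ) ℝ ℝ 1 volume).continuous.norm.tendsto 0
  rw [map_zero, norm_zero] at this
  exact this

noncomputable def Jof (m : Measure ℝ) [IsFiniteMeasure m] (E : SchwartzMap ℝ ℝ) : SchwartzMap ℝ ℝ →L[ℝ] ℝ where
  toFun F := Bform m E F
  map_add' := B_add m E
  map_smul' c F := B_smul m c E F
  cont := by
    let L : SchwartzMap ℝ ℝ →ₗ[ℝ] ℝ :=
      { toFun := fun F => Bform m E F
        map_add' := B_add m E
        map_smul' := fun c F => B_smul m c E F }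
    refine continuous_of_continuousAt_zero L ?_
    unfold ContinuousAt
    rw [map_zero]
    refine squeeze_zero_norm (B_bound m E) ?_
    simpa using tendsto_L1.const_mul (1/2 * m.real Set.univ * ∫ s, ‖E s‖)

lemma two_B_le (m : Measure ℝ) [IsFiniteMeasure m] (E F : SchwartzMap ℝ ℝ) : 2 * Bform m E F - Bform m F F ≤ Bform m E E := by
  have h := B_nonneg m (E + (-1 : ℝ) • F)
  rw [B_add, B_smul, B_symm m _ E, B_symm m _ F, B_add, B_add, B_smul, B_smul,
    B_symm m F E] at h
  linarith

lemma abs_le_of_Qstar (m : Measure ℝ) [IsFiniteMeasure m] (J : S0d) (hJ : Qstar m J = 1) (E : ↥S0) :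
    |J E| ≤ Real.sqrt (Qform m E) := by
  have h : ∀ t : ℝ, 0 ≤ Qform m E * (t * t) + (-2 * J E) * t + 1 := by
    intro t
    have h1 : ((2 * J (t • E) - Qform m (t • E) : ℝ) : EReal) ≤ 1 := by
      rw [← hJ]
      exact le_iSup (fun E : ↥S0 => ((2 * J E - Qform m E : ℝ) : EReal)) (t • E)
    have h2 : 2 * J (t • E) - Qform m (t • E) ≤ 1 := by exact_mod_cast h1
    have h3 : Qform m (t • E) = t * (t * Qform m E) := by
      unfold Qform
      rw [Submodule.coe_smul, B_smul, B_symm, B_smul]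
    rw [h3, map_smul, smul_eq_mul] at h2
    linarith
  have := discrim_le_zero h
  unfold discrim at this
  exact Real.abs_le_sqrt (by linarith)

lemma Qstar_Jof (m : Measure ℝ) [IsFiniteMeasure m] (F : ↥S0) (hF : Qform m F = 1) :
    Qstar m ((Jof m F).comp S0.subtypeL) = 1 := by
  unfold Qstar
  apply le_antisymm
  · refine iSup_le fun E => ?_
    have := two_B_le m F E
    have h : 2 * ((Jof m F).comp S0.subtypeL) E - Qform m E ≤ 1 := by
      rw [← hF]; exact this
    exact_mod_cast h
  · refine le_iSup_of_le F ?_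
    have h : (1:ℝ) ≤ 2 * ((Jof m F).comp S0.subtypeL) F - Qform m F := by
      have : ((Jof m F).comp S0.subtypeL) F = Qform m F := rfl
      rw [this, hF]; norm_num
    exact_mod_cast h

/-- If `Q` is not identically zero on `S₀`, then for every `E ∈ S₀`:
`√(Q(E)) = sup{ |⟨J,E⟩| : J ∈ S₀*, Q*(J) = 1 }`. -/
theorem statement13 (m : Measure ℝ) [IsFiniteMeasure m]
    (hQ : ¬ (∀ E : ↥S0, Qform m E = 0)) (E : ↥S0) :
    Real.sqrt (Qform m E) = sSup {x : ℝ | ∃ J : S0d, Qstar m J = 1 ∧ x = |J E|} := by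
  apply le_antisymm
  · have hn : 0 ≤ Qform m E := B_nonneg m E
    rcases hn.eq_or_lt with h0 | hpos
    · rw [← h0, Real.sqrt_zero]
      refine Real.sSup_nonneg ?_
      rintro x ⟨J, _, rfl⟩
      exact abs_nonneg _
    · have hs := Real.sqrt_pos.2 hpos
      have hsq := Real.mul_self_sqrt hn
      refine le_csSup ⟨Real.sqrt (Qform m E), ?_⟩ ?_
      · rintro x ⟨J, hJ, rfl⟩
        exact abs_le_of_Qstar m J hJ E
      · set r := Real.sqrt (Qform m E) with hr
        refine ⟨(Jof m (r⁻¹ • E : ↥S0)).comp S0.subtypeL, Qstar_Jof m _ ?_, ?_⟩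
        · unfold Qform at hsq ⊢
          rw [Submodule.coe_smul, B_smul, B_symm, B_smul, ← hsq]
          field_simp
        · have : ((Jof m (r⁻¹ • E : ↥S0)).comp S0.subtypeL) E = r⁻¹ * Qform m E := by
            change Bform m (r⁻¹ • E : ↥S0) E = _
            rw [Submodule.coe_smul, B_symm, B_smul]; rfl
          rw [this, ← hsq]
          have : r⁻¹ * (r * r) = r := by field_simp
          rw [this, abs_of_pos hs]
  · refine Real.sSup_le ?_ (Real.sqrt_nonneg _)
    rintro x ⟨J, hJ, rfl⟩
    exact abs_le_of_Qstar m J hJ E
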